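/- Let p be a positive integer, μ ∈ ℝ^p, Σ a real symmetric positive definite p×p matrix, S a real diagonal positive semidefinite p×p matrix with 2Σ − S positive semidefinite, and L a real p×p matrix with L Lᵀ = 2S − S Σ⁻¹ S. Let X be a random vector in ℝ^p with the multivariate Gaussian distribution of mean μ and covariance Σ, and U an independent standard Gaussian random vector in ℝ^p. Define X̃ = μ + (I − SΣ⁻¹)(X − μ) + L U. Then for every subset A ⊆ {1, …, p}, the random vector (X, X̃)_{swap(A)}, obtained from (X, X̃) by exchanging the j-th and (p+j)-th coordinates for every j ∈ A, has the same distribution as (X, X̃). -/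

import Mathlib

open MeasureTheory Matrix

/-- `ν` is the multivariate Gaussian measure on `ℝ^d` (modelled as `d → ℝ`) with mean
vector `m` and covariance matrix `G`, characterized (Cramér–Wold) by the requirement
that every linear functional `x ↦ ∑ i, a i * x i` pushes `ν` forward to the real
Gaussian with mean `⟪a, m⟫` and variance `aᵀ G a`. -/
def IsMultivariateGaussian {d : Type*} [Fintype d] (ν : Measure (d → ℝ))
    (m : d → ℝ) (G : Matrix d d ℝ) : Prop :=
  IsProbabilityMeasure ν ∧
    ∀ a : d → ℝ,
      Measure.map (fun x => ∑ i, a i * x i) ν =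
        ProbabilityTheory.gaussianReal (∑ i, a i * m i)
          (Real.toNNReal (a ⬝ᵥ G.mulVec a))

/-- The coordinate-swap map on `Fin p ⊕ Fin p` exchanging coordinate `j` with
coordinate `p + j` for every `j ∈ A` and fixing all other coordinates. -/
def knockoffSwapFun {p : ℕ} (A : Finset (Fin p)) : Fin p ⊕ Fin p → Fin p ⊕ Fin p
  | .inl j => if j ∈ A then .inr j else .inl j
  | .inr j => if j ∈ A then .inl j else .inr j

/-!
The joint vector `(X, X̃)` is an affine image of the Gaussian vector `(X, U)`, hence Gaussian; its
mean is `(μ, μ)` and its covariance is the block matrix with diagonal blocks `Σ` and off-diagonal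
blocks `Σ - S`. A swap permutes the entries of both. It fixes the mean, and it fixes the covariance
because the two kinds of block differ only by `S`, which vanishes off the diagonal. A Gaussian law
is determined by its mean and covariance.
-/

theorem measurable_dotProduct {d : Type*} [Fintype d] (a : d → ℝ) :
    Measurable fun x : d → ℝ => a ⬝ᵥ x :=
  (continuous_const.dotProduct continuous_id).measurable

namespace IsMultivariateGaussian

variable {d e : Type*} [Fintype d] [Fintype e] {ν ν' : Measure (d → ℝ)} {m : d → ℝ}
  {G : Matrix d d ℝ}

theorem iff_map_dotProduct :
    IsMultivariateGaussian ν m G ↔ IsProbabilityMeasure ν ∧ ∀ a : d → ℝ,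
      ν.map (fun x => a ⬝ᵥ x) =
        ProbabilityTheory.gaussianReal (a ⬝ᵥ m) (a ⬝ᵥ G *ᵥ a).toNNReal :=
  Iff.rfl

theorem map_dotProduct (h : IsMultivariateGaussian ν m G) (a : d → ℝ) :
    ν.map (fun x => a ⬝ᵥ x) =
      ProbabilityTheory.gaussianReal (a ⬝ᵥ m) (a ⬝ᵥ G *ᵥ a).toNNReal :=
  (iff_map_dotProduct.1 h).2 a

theorem aemeasurable {Ω : Type*} [MeasurableSpace Ω] {P : Measure Ω} {X : Ω → d → ℝ}
    (h : IsMultivariateGaussian (P.map X) m G) : AEMeasurable X P :=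
  have := h.1
  aemeasurable_of_map_neZero inferInstance

theorem ext (h : IsMultivariateGaussian ν m G) (h' : IsMultivariateGaussian ν' m G) :
    ν = ν' := by
  classical
  have := h.1
  have := h'.1
  refine Measure.ext_of_charFunDual (funext fun ℓ => ?_)
  have hℓ : ⇑ℓ = fun x => (fun i => ℓ (Pi.single i 1)) ⬝ᵥ x := by
    funext x
    conv_lhs => rw [pi_eq_sum_univ' x]
    simp only [dotProduct, map_sum, map_smul, smul_eq_mul, mul_comm]
  rw [charFunDual_eq_charFun_map_one, charFunDual_eq_charFun_map_one, hℓ, h.map_dotProduct,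
    h'.map_dotProduct]

theorem map_mulVec_add (h : IsMultivariateGaussian ν m G) (B : Matrix e d ℝ) (c : e → ℝ) :
    IsMultivariateGaussian (ν.map fun x => B *ᵥ x + c) (B *ᵥ m + c) (B * G * Bᵀ) := by
  have := h.1
  have hmeas : Measurable fun x : d → ℝ => B *ᵥ x + c := by fun_prop
  refine iff_map_dotProduct.2 ⟨Measure.isProbabilityMeasure_map hmeas.aemeasurable, fun a => ?_⟩
  have hdot : (fun x => a ⬝ᵥ x) ∘ (fun x : d → ℝ => B *ᵥ x + c) =
      (fun y => y + a ⬝ᵥ c) ∘ fun x => (a ᵥ* B) ⬝ᵥ x := by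
    funext x
    simp only [Function.comp_apply, dotProduct_add, dotProduct_mulVec]
  have hmean : a ⬝ᵥ (B *ᵥ m + c) = (a ᵥ* B) ⬝ᵥ m + a ⬝ᵥ c := by
    rw [dotProduct_add, dotProduct_mulVec]
  have hvar : a ⬝ᵥ (B * G * Bᵀ) *ᵥ a = (a ᵥ* B) ⬝ᵥ G *ᵥ (a ᵥ* B) := by
    rw [← mulVec_mulVec, ← mulVec_mulVec, mulVec_transpose, dotProduct_mulVec]
  rw [Measure.map_map (measurable_dotProduct a) hmeas, hdot,
    ← Measure.map_map (by fun_prop) (measurable_dotProduct _), h.map_dotProduct,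
    ProbabilityTheory.gaussianReal_map_add_const, hmean, hvar]

theorem map_precomp (h : IsMultivariateGaussian ν m G) (f : e → d) :
    IsMultivariateGaussian (ν.map fun x => x ∘ f) (m ∘ f) (G.submatrix f f) := by
  classical
  let B : Matrix e d ℝ := (1 : Matrix d d ℝ).submatrix f id
  have hB (x : d → ℝ) : B *ᵥ x + 0 = x ∘ f := by
    ext i
    simp [B, mulVec, dotProduct, one_apply]
  have hcov : B * G * Bᵀ = G.submatrix f f := by
    ext i j
    simp [B, mul_apply, one_apply]
  simpa only [hB, hcov] using h.map_mulVec_add B 0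

theorem sumElim {Ω : Type*} [MeasurableSpace Ω] {P : Measure Ω} {X : Ω → d → ℝ}
    {Y : Ω → e → ℝ} {m' : e → ℝ} {G' : Matrix e e ℝ}
    (hX : IsMultivariateGaussian (P.map X) m G)
    (hY : IsMultivariateGaussian (P.map Y) m' G') (hG : G.PosSemidef) (hG' : G'.PosSemidef)
    (hXY : ProbabilityTheory.IndepFun X Y P) :
    IsMultivariateGaussian (P.map fun ω => Sum.elim (X ω) (Y ω)) (Sum.elim m m')
      (fromBlocks G 0 0 G') := by
  have hXm := hX.aemeasurable
  have hYm := hY.aemeasurable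
  have := hX.1
  have : IsProbabilityMeasure P := Measure.isProbabilityMeasure_of_map X
  have hXYm : AEMeasurable (fun ω => Sum.elim (X ω) (Y ω)) P :=
    aemeasurable_pi_iff.2 (Sum.rec (aemeasurable_pi_iff.1 hXm) (aemeasurable_pi_iff.1 hYm))
  refine iff_map_dotProduct.2 ⟨Measure.isProbabilityMeasure_map hXYm, fun a => ?_⟩
  obtain ⟨b, c, rfl⟩ : ∃ b c, a = Sum.elim b c := ⟨_, _, (Sum.elim_comp_inl_inr a).symm⟩
  have hbX := hX.map_dotProduct b
  have hcY := hY.map_dotProduct c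
  rw [AEMeasurable.map_map_of_aemeasurable (measurable_dotProduct b).aemeasurable hXm] at hbX
  rw [AEMeasurable.map_map_of_aemeasurable (measurable_dotProduct c).aemeasurable hYm] at hcY
  have hindep : ProbabilityTheory.IndepFun ((fun x => b ⬝ᵥ x) ∘ X) ((fun y => c ⬝ᵥ y) ∘ Y) P :=
    hXY.comp (measurable_dotProduct b) (measurable_dotProduct c)
  have hdot : (fun z => Sum.elim b c ⬝ᵥ z) ∘ (fun ω => Sum.elim (X ω) (Y ω)) =
      (fun x => b ⬝ᵥ x) ∘ X + (fun y => c ⬝ᵥ y) ∘ Y := by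
    funext ω
    exact sumElim_dotProduct_sumElim ..
  have hvar : Sum.elim b c ⬝ᵥ fromBlocks G 0 0 G' *ᵥ Sum.elim b c =
      b ⬝ᵥ G *ᵥ b + c ⬝ᵥ G' *ᵥ c := by
    simp [fromBlocks_mulVec, sumElim_dotProduct_sumElim]
  rw [AEMeasurable.map_map_of_aemeasurable (measurable_dotProduct _).aemeasurable hXYm, hdot,
    sumElim_dotProduct_sumElim, hvar,
    ProbabilityTheory.gaussianReal_add_gaussianReal_of_indepFun hindep hbX hcY,
    Real.toNNReal_add (by simpa using hG.dotProduct_mulVec_nonneg b)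
      (by simpa using hG'.dotProduct_mulVec_nonneg c)]

end IsMultivariateGaussian

/-- The joint covariance matrix of a vector with covariance `Sig` and its Gaussian knockoff with
parameter `S`, with the knockoff coordinates in the right summand of `n ⊕ n`. -/
def knockoffCov {n R : Type*} [Sub R] (Sig S : Matrix n n R) : Matrix (n ⊕ n) (n ⊕ n) R :=
  fromBlocks Sig (Sig - S) (Sig - S) Sig

theorem fromBlocks_mul_mul_transpose_eq_knockoffCov {n k R : Type*} [Fintype n] [DecidableEq n]
    [Fintype k] [DecidableEq k] [CommRing R] {Sig S : Matrix n n R} {L : Matrix n k R}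
    (hSig : IsUnit Sig.det) (hSig_symm : Sig.IsSymm) (hS_symm : S.IsSymm)
    (hL : L * Lᵀ = (2 : R) • S - S * Sig⁻¹ * S) :
    fromBlocks 1 0 (1 - S * Sig⁻¹) L * fromBlocks Sig 0 0 (1 : Matrix k k R) *
      (fromBlocks 1 0 (1 - S * Sig⁻¹) L)ᵀ = knockoffCov Sig S := by
  have hW : (1 - S * Sig⁻¹) * Sig = Sig - S := by
    rw [sub_mul, one_mul, nonsing_inv_mul_cancel_right _ _ hSig]
  have hWt : (1 - S * Sig⁻¹)ᵀ = 1 - Sig⁻¹ * S := by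
    rw [transpose_sub, transpose_one, transpose_mul, transpose_nonsing_inv, hSig_symm.eq,
      hS_symm.eq]
  have hSigW : Sig * (1 - Sig⁻¹ * S) = Sig - S := by
    rw [mul_sub, mul_one, mul_nonsing_inv_cancel_left _ _ hSig]
  have hcorner : (Sig - S) * (1 - Sig⁻¹ * S) + L * Lᵀ = Sig := by
    rw [sub_mul, hSigW, mul_sub, mul_one, hL, two_smul, ← Matrix.mul_assoc]
    abel
  simp only [knockoffCov, fromBlocks_transpose, fromBlocks_multiply, Matrix.one_mul,
    Matrix.mul_one, Matrix.zero_mul, Matrix.mul_zero, add_zero, zero_add, transpose_one,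
    transpose_zero, hW, hWt, hSigW, hcorner]

theorem IsMultivariateGaussian.sumElim_knockoff {n k Ω : Type*} [Fintype n] [DecidableEq n]
    [Fintype k] [DecidableEq k] [MeasurableSpace Ω] {P : Measure Ω} {μ : n → ℝ}
    {Sig S : Matrix n n ℝ} {L : Matrix n k ℝ} {X : Ω → n → ℝ} {U : Ω → k → ℝ}
    (hX : IsMultivariateGaussian (P.map X) μ Sig) (hU : IsMultivariateGaussian (P.map U) 0 1)
    (hXU : ProbabilityTheory.IndepFun X U P) (hSig : Sig.PosDef) (hS : S.IsSymm)
    (hL : L * Lᵀ = (2 : ℝ) • S - S * Sig⁻¹ * S) :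
    IsMultivariateGaussian
      (P.map fun ω => Sum.elim (X ω) (μ + (1 - S * Sig⁻¹) *ᵥ (X ω - μ) + L *ᵥ U ω))
      (Sum.elim μ μ) (knockoffCov Sig S) := by
  set W := 1 - S * Sig⁻¹
  have hXU_law := hX.sumElim hU hSig.posSemidef .one hXU
  have haffine (x : n → ℝ) (u : k → ℝ) :
      fromBlocks 1 0 W L *ᵥ Sum.elim x u + Sum.elim (0 : n → ℝ) (μ - W *ᵥ μ) =
        Sum.elim x (μ + W *ᵥ (x - μ) + L *ᵥ u) := by
    have hknockoff : W *ᵥ x + L *ᵥ u + (μ - W *ᵥ μ) = μ + W *ᵥ (x - μ) + L *ᵥ u := by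
      rw [mulVec_sub]
      abel
    rw [← hknockoff]
    ext (i | i) <;> simp [fromBlocks_mulVec]
  have hcov : fromBlocks 1 0 W L * fromBlocks Sig 0 0 (1 : Matrix k k ℝ) * (fromBlocks 1 0 W L)ᵀ =
      knockoffCov Sig S :=
    fromBlocks_mul_mul_transpose_eq_knockoffCov hSig.det_pos.ne'.isUnit
      ((conjTranspose_eq_transpose_of_trivial Sig).symm.trans hSig.isHermitian) hS hL
  have h := hXU_law.map_mulVec_add (fromBlocks 1 0 W L) (Sum.elim (0 : n → ℝ) (μ - W *ᵥ μ))
  rw [AEMeasurable.map_map_of_aemeasurable (by fun_prop) hXU_law.aemeasurable, hcov, haffine] at h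
  simpa [Function.comp_def, haffine] using h

theorem sumElim_self_comp_knockoffSwapFun {p : ℕ} {α : Type*} (A : Finset (Fin p))
    (v : Fin p → α) : Sum.elim v v ∘ knockoffSwapFun A = Sum.elim v v := by
  funext i
  rcases i with j | j <;> by_cases hj : j ∈ A <;> simp [knockoffSwapFun, hj]

theorem knockoffCov_submatrix_knockoffSwapFun {p : ℕ} {R : Type*} [AddGroup R]
    (Sig : Matrix (Fin p) (Fin p) R) {S : Matrix (Fin p) (Fin p) R} (hS : S.IsDiag)
    (A : Finset (Fin p)) :
    (knockoffCov Sig S).submatrix (knockoffSwapFun A) (knockoffSwapFun A) = knockoffCov Sig S := by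
  have hoff {i j : Fin p} (hi : i ∈ A) (hj : j ∉ A) : S i j = 0 ∧ S j i = 0 :=
    ⟨hS (by rintro rfl; exact hj hi), hS (by rintro rfl; exact hj hi)⟩
  ext (i | i) (j | j) <;> by_cases hi : i ∈ A <;> by_cases hj : j ∈ A <;>
    simp [knockoffCov, knockoffSwapFun, hi, hj, hoff]

theorem gaussian_knockoff_exchangeability_general {p : ℕ} {k : Type*} [Fintype k] [DecidableEq k]
    (μ : Fin p → ℝ) (Sig S : Matrix (Fin p) (Fin p) ℝ) (L : Matrix (Fin p) k ℝ)
    (hSig : Sig.PosDef) (hSdiag : S.IsDiag) (hL : L * Lᵀ = (2 : ℝ) • S - S * Sig⁻¹ * S)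
    {Ω : Type*} [MeasurableSpace Ω] (P : Measure Ω) (X : Ω → Fin p → ℝ) (U : Ω → k → ℝ)
    (hXU : ProbabilityTheory.IndepFun X U P)
    (hXlaw : IsMultivariateGaussian (P.map X) μ Sig)
    (hUlaw : IsMultivariateGaussian (P.map U) 0 1)
    (Xt : Ω → Fin p → ℝ) (hXt : Xt = fun ω => μ + (1 - S * Sig⁻¹) *ᵥ (X ω - μ) + L *ᵥ U ω)
    (A : Finset (Fin p)) :
    P.map (fun ω => Sum.elim (X ω) (Xt ω) ∘ knockoffSwapFun A) =
      P.map (fun ω => Sum.elim (X ω) (Xt ω)) := by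
  have hlaw : IsMultivariateGaussian (P.map fun ω => Sum.elim (X ω) (Xt ω)) (Sum.elim μ μ)
      (knockoffCov Sig S) :=
    hXt ▸ hXlaw.sumElim_knockoff hUlaw hXU hSig hSdiag.isSymm hL
  have hcomp : Measurable fun x : Fin p ⊕ Fin p → ℝ => x ∘ knockoffSwapFun A :=
    measurable_pi_lambda _ fun i => measurable_pi_apply (knockoffSwapFun A i)
  have hswap := hlaw.map_precomp (knockoffSwapFun A)
  rw [AEMeasurable.map_map_of_aemeasurable hcomp.aemeasurable hlaw.aemeasurable,
    sumElim_self_comp_knockoffSwapFun, knockoffCov_submatrix_knockoffSwapFun Sig hSdiag] at hswap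
  exact hswap.ext hlaw

/-- **The Gaussian knockoff construction satisfies knockoff exchangeability.**
Let `p` be a positive integer, `μ ∈ ℝ^p`, `Σ` a real symmetric positive definite
`p×p` matrix, `S` a real diagonal positive semidefinite `p×p` matrix with `2Σ − S`
positive semidefinite, and `L` a real `p×p` matrix with `L Lᵀ = 2S − S Σ⁻¹ S`.
Let `X` be a random vector in `ℝ^p` with the multivariate Gaussian distribution of
mean `μ` and covariance `Σ`, and `U` an independent standard Gaussian random vector
in `ℝ^p`.  Define `X̃ = μ + (I − SΣ⁻¹)(X − μ) + L U`.  Then for every subset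
`A ⊆ {1, …, p}`, the random vector `(X, X̃)_{swap(A)}`, obtained from `(X, X̃)` by
exchanging the `j`-th and `(p+j)`-th coordinates for every `j ∈ A`, has the same
distribution as `(X, X̃)`. -/
theorem gaussian_knockoff_exchangeability {p : ℕ} (hp : 0 < p)
    (μ : Fin p → ℝ) (Sig S L : Matrix (Fin p) (Fin p) ℝ)
    (hSig : Sig.PosDef) (hSdiag : S.IsDiag) (hSpsd : S.PosSemidef)
    (h2 : ((2 : ℝ) • Sig - S).PosSemidef)
    (hL : L * Lᵀ = (2 : ℝ) • S - S * Sig⁻¹ * S)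
    {Ω : Type*} [MeasurableSpace Ω] (P : Measure Ω) [IsProbabilityMeasure P]
    (X U : Ω → (Fin p → ℝ)) (hX : Measurable X) (hU : Measurable U)
    (hXU : ProbabilityTheory.IndepFun X U P)
    (hXlaw : IsMultivariateGaussian (P.map X) μ Sig)
    (hUlaw : IsMultivariateGaussian (P.map U) 0 1)
    (Xt : Ω → (Fin p → ℝ))
    (hXt : Xt = fun ω => μ + (1 - S * Sig⁻¹).mulVec (X ω - μ) + L.mulVec (U ω))
    (A : Finset (Fin p)) :
    Measure.map (fun ω => (Sum.elim (X ω) (Xt ω)) ∘ knockoffSwapFun A) P =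
      Measure.map (fun ω => Sum.elim (X ω) (Xt ω)) P := by
  exact gaussian_knockoff_exchangeability_general μ Sig S L hSig hSdiag hL P X U hXU hXlaw hUlaw
    Xt hXt A
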